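/- arXiv:1910.08268 — 8 statements merged into one kernel-verified Lean document; each statement's English description precedes it below -/
import Mathlib

section
/- Let K, N be positive integers, let l ∈ {1,…,K−1}, and let t ∈ {0,1,…,max(⌈(K+1)/l⌉−2, 0)}. Set P = C(K−l,t), G = C(K,t), Q = G−P, and let m be a positive integer with 2^m ≥ 2G, and F = m·P. Then there exists a finite probability space carrying random variables W = (W_1,…,W_N) uniformly distributed on (Fin 2^F)^N (the files), cache variables Z_1,…,Z_K each taking values in a set of cardinality at most 2^{m·(N·C(K−1,t−1)+C(K−1,t))}, and for every demand vector D ∈ (Fin N)^K a broadcast variable X_D taking values in a set of cardinality at most 2^{m·C(K,t+1)}, such that: (i) correctness: for every D and every k ∈ {1,…,K} there is a function μ_{k,D} with W_{D(k)} = μ_{k,D}(Z_k, X_D) almost surely; (ii) cache secrecy: for every set L ⊆ {1,…,K} with |L| = l, the tuple (Z_k)_{k∈L} is independent of (W_1,…,W_N); (iii) delivery secrecy: for every D and every such L, the pair (X_D, (Z_k)_{k∈L}) is independent of the tuple (W_n)_{n ∉ {D(k) : k∈L}}. In particular the rate pair (M,R) with M = (N·C(K−1,t−1)+C(K−1,t))/C(K−l,t)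 and R = C(K,t+1)/C(K−l,t) is achievable. -/
open MeasureTheory ProbabilityTheory

/-!
Every file is shared by a Shamir ramp scheme whose shares are indexed by the `t`-sets of users, and
there is an independent uniform key for each `(t + 1)`-set. Each user caches the shares and the keys
whose index contains him. For a demand, the server sends for each `(t + 1)`-set `B` the sum of the
shares which the users of `B` request and the rest of `B` has cached, masked by the key of `B`; user
`k` recovers from it, with `B = T ∪ {k}`, the share `T` of his file.

All these maps are homomorphisms on a finite group with its uniform measure. Translation preserves
this measure, so a view is independent of a tuple of files as soon as every value of this tuple is
attained on the kernel of the view. For the caches of `l` users this is the privacy of the ramp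
scheme, because they hold only `C(K, t) - C(K - l, t)` shares of each file; for the broadcast one
also takes each key to be the negative of the sum it masks.
-/

namespace SecureCodedCaching

section Uniform

variable {α β : Type*} [Fintype α] [Nonempty α] [Fintype β] [Nonempty β]
  [MeasurableSpace α] [MeasurableSpace β] [DiscreteMeasurableSpace α] [DiscreteMeasurableSpace β]

lemma map_equiv_toMeasure_uniformOfFintype (e : α ≃ β) :
    (PMF.uniformOfFintype α).toMeasure.map e = (PMF.uniformOfFintype β).toMeasure := by
  refine Measure.ext_of_singleton fun b => ?_
  rw [Measure.map_apply .of_discrete (measurableSet_singleton b), ← e.image_symm_eq_preimage,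
    Set.image_singleton, PMF.toMeasure_apply_singleton _ _ (measurableSet_singleton _),
    PMF.toMeasure_apply_singleton _ _ (measurableSet_singleton _), PMF.uniformOfFintype_apply,
    PMF.uniformOfFintype_apply, Fintype.card_congr e]

instance isAddRightInvariant_toMeasure_uniformOfFintype [AddGroup α] :
    (PMF.uniformOfFintype α).toMeasure.IsAddRightInvariant :=
  ⟨fun g => map_equiv_toMeasure_uniformOfFintype (Equiv.addRight g)⟩

lemma eq_smul_uniformOfFintype_of_isAddRightInvariant [AddGroup α] (μ : Measure α)
    [μ.IsAddRightInvariant] : μ = μ Set.univ • (PMF.uniformOfFintype α).toMeasure := by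
  have singleton_eq (a : α) : μ {a} = μ {0} := by
    simpa only [Set.preimage_add_right_singleton, sub_eq_add_neg, neg_neg, zero_add] using
      measure_preimage_add_right μ (-a) {0}
  have univ_eq : μ Set.univ = Fintype.card α * μ {0} := by
    rw [← Finset.coe_univ, ← sum_measure_singleton]
    simp only [singleton_eq, Finset.sum_const, Finset.card_univ, nsmul_eq_mul]
  refine Measure.ext_of_singleton fun a => ?_
  rw [Measure.smul_apply, PMF.toMeasure_apply_singleton _ _ (measurableSet_singleton a),
    PMF.uniformOfFintype_apply, smul_eq_mul, univ_eq, singleton_eq, mul_comm, ← mul_assoc,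
    ENNReal.inv_mul_cancel (by simp) (by simp), one_mul]

end Uniform

section Shifts

variable {Ω α β : Type*} [AddGroup Ω] [MeasurableSpace Ω] [DiscreteMeasurableSpace Ω]
  [AddGroup β] [MeasurableSpace β] [DiscreteMeasurableSpace β]
  {μ : Measure Ω} [μ.IsAddRightInvariant] {w : Ω → β}

lemma map_restrict_eq_smul_uniformOfFintype [Fintype β] {S : Set Ω}
    (h : ∀ b, ∃ v, (∀ ω, w (ω + v) = w ω + b) ∧ ∀ ω, ω + v ∈ S ↔ ω ∈ S) :
    (μ.restrict S).map w = μ S • (PMF.uniformOfFintype β).toMeasure := by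
  have invariant : ((μ.restrict S).map w).IsAddRightInvariant := by
    refine (forall_measure_preimage_add_right_iff _).1 fun b T hT => ?_
    obtain ⟨v, hw, hS⟩ := h b
    rw [Measure.map_apply .of_discrete .of_discrete, Measure.map_apply .of_discrete hT,
      Measure.restrict_apply .of_discrete, Measure.restrict_apply .of_discrete,
      ← measure_preimage_add_right μ v (w ⁻¹' T ∩ S)]
    congr 1
    ext ω
    simp only [Set.mem_inter_iff, Set.mem_preimage, hw, hS]
  rw [eq_smul_uniformOfFintype_of_isAddRightInvariant ((μ.restrict S).map w),
    Measure.map_apply .of_discrete .univ, Set.preimage_univ, Measure.restrict_apply_univ]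

variable [IsProbabilityMeasure μ]

lemma map_eq_uniformOfFintype [Fintype β] (h : ∀ b, ∃ v, ∀ ω, w (ω + v) = w ω + b) :
    μ.map w = (PMF.uniformOfFintype β).toMeasure := by
  simpa using map_restrict_eq_smul_uniformOfFintype (μ := μ) (S := Set.univ)
    fun b => (h b).imp fun _ hv => ⟨hv, fun _ => by simp only [Set.mem_univ]⟩

lemma indepFun_of_forall_exists_shift [Finite β] [MeasurableSpace α] {f : Ω → α}
    (h : ∀ b, ∃ v, (∀ ω, w (ω + v) = w ω + b) ∧ ∀ ω, f (ω + v) = f ω) : IndepFun f w μ := by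
  have := Fintype.ofFinite β
  rw [indepFun_iff_measure_inter_preimage_eq_mul]
  intro S T _ hT
  have restricted := map_restrict_eq_smul_uniformOfFintype (μ := μ) (S := f ⁻¹' S) fun b =>
    (h b).imp fun v hv => ⟨hv.1, fun ω => by rw [Set.mem_preimage, Set.mem_preimage, hv.2]⟩
  have uniform := map_eq_uniformOfFintype (μ := μ) fun b => (h b).imp fun _ hv => hv.1
  rw [← Measure.map_apply .of_discrete hT, uniform, ← smul_eq_mul, ← Measure.smul_apply,
    ← restricted, Measure.map_apply .of_discrete hT, Measure.restrict_apply .of_discrete,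
    Set.inter_comm]

end Shifts

section SecureScheme

variable {υ ν Ω A B : Type*} {C : υ → Type*} [DecidableEq ν] [Fintype ν] [Fintype A]
  [MeasurableSpace Ω] [MeasurableSpace A] [MeasurableSpace B] [∀ k, MeasurableSpace (C k)]

/-- Files `W`, caches `Z` and broadcasts `X` form a secure coded caching scheme, resilient to
collusions of `l` users; `υ` is the type of users, and `ν` that of file indices. -/
structure IsSecureScheme [Nonempty A] (l : ℕ) (μ : Measure Ω) (W : Ω → ν → A)
    (Z : ∀ k, Ω → C k) (X : (υ → ν) → Ω → B) : Prop where
  map_files : μ.map W = (PMF.uniformOfFintype (ν → A)).toMeasure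
  correct : ∀ (D : υ → ν) (k : υ), ∃ dec : C k × B → A,
    (fun ω => W ω (D k)) =ᵐ[μ] fun ω => dec (Z k ω, X D ω)
  cache_secrecy : ∀ L : Finset υ, L.card = l → IndepFun (fun ω (k : L) => Z k ω) W μ
  delivery_secrecy : ∀ (D : υ → ν) (L : Finset υ), L.card = l →
    IndepFun (fun ω => (X D ω, fun k : L => Z k ω))
      (fun ω (n : {n : ν // n ∉ L.image D}) => W ω n) μ

lemma IsSecureScheme.encode {A' B' : Type*} {C' : υ → Type*} [Fintype A'] [Nonempty A']
    [Nonempty A] [MeasurableSpace A'] [MeasurableSpace B'] [∀ k, MeasurableSpace (C' k)]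
    [DiscreteMeasurableSpace A] [DiscreteMeasurableSpace B] [∀ k, DiscreteMeasurableSpace (C k)]
    [DiscreteMeasurableSpace A'] [DiscreteMeasurableSpace Ω]
    {l : ℕ} {μ : Measure Ω} {W : Ω → ν → A} {Z : ∀ k, Ω → C k} {X : (υ → ν) → Ω → B}
    (h : IsSecureScheme l μ W Z X) (a : A ≃ A') (c : ∀ k, C k ↪ C' k) (b : B ↪ B') :
    IsSecureScheme l μ (fun ω n => a (W ω n)) (fun k ω => c k (Z k ω))
      (fun D ω => b (X D ω)) where
  map_files := by
    rw [← map_equiv_toMeasure_uniformOfFintype (Equiv.piCongrRight fun _ : ν => a),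
      ← h.map_files, Measure.map_map .of_discrete .of_discrete]
    rfl
  correct D k := by
    obtain ⟨dec, hdec⟩ := h.correct D k
    have hcb : Function.Injective (Prod.map (c k) b) := (c k).injective.prodMap b.injective
    refine ⟨Function.extend (Prod.map (c k) b) (a ∘ dec) fun _ => Classical.arbitrary A', ?_⟩
    filter_upwards [hdec] with ω hω
    rw [hω]
    exact (hcb.extend_apply (a ∘ dec) _ (Z k ω, X D ω)).symm
  cache_secrecy L hL := by
    refine (h.cache_secrecy L hL).comp (φ := fun z (k : L) => c k (z k)) (ψ := fun w n => a (w n))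
      (measurable_pi_lambda _ fun k => ?_) .of_discrete
    exact Measurable.of_discrete.comp (measurable_pi_apply k)
  delivery_secrecy D L hL := by
    refine (h.delivery_secrecy D L hL).comp
      (φ := fun x => (b x.1, fun k : L => c k (x.2 k))) (ψ := fun w n => a (w n))
      ((Measurable.of_discrete.comp measurable_fst).prodMk
        (measurable_pi_lambda _ fun k => ?_)) .of_discrete
    exact Measurable.of_discrete.comp ((measurable_pi_apply k).comp measurable_snd)

lemma isSecureScheme_of_addMonoidHom [AddGroup Ω] [DiscreteMeasurableSpace Ω]
    [AddGroup A] [DiscreteMeasurableSpace A] [AddGroup B] [∀ k, AddGroup (C k)]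
    {l : ℕ} {μ : Measure Ω} [μ.IsAddRightInvariant] [IsProbabilityMeasure μ]
    {W : Ω →+ ν → A} {Z : ∀ k, Ω →+ C k} {X : (υ → ν) → Ω →+ B} (hW : Function.Surjective W)
    (hdec : ∀ D k v, Z k v = 0 → X D v = 0 → W v (D k) = 0)
    (hcache : ∀ L : Finset υ, L.card = l → ∀ w, ∃ v, W v = w ∧ ∀ k ∈ L, Z k v = 0)
    (hdelivery : ∀ (D : υ → ν) (L : Finset υ), L.card = l → ∀ w : ν → A,
      (∀ k ∈ L, w (D k) = 0) → ∃ v, W v = w ∧ X D v = 0 ∧ ∀ k ∈ L, Z k v = 0) :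
    IsSecureScheme l μ W (fun k => Z k) (fun D => X D) where
  map_files := map_eq_uniformOfFintype fun w =>
    (hW w).imp fun v hv ω => by rw [map_add, hv]
  correct D k := by
    have factors : Function.FactorsThrough (fun ω => W ω (D k)) fun ω => (Z k ω, X D ω) := by
      intro ω ω' hview
      obtain ⟨hZ, hX⟩ := Prod.ext_iff.1 hview
      have hdiff := hdec D k (ω - ω') (by rw [map_sub, sub_eq_zero]; exact hZ)
        (by rw [map_sub, sub_eq_zero]; exact hX)
      rwa [map_sub, Pi.sub_apply, sub_eq_zero] at hdiff
    obtain ⟨dec, hfactor⟩ := (Function.factorsThrough_iff _).1 factors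
    exact ⟨dec, Filter.Eventually.of_forall fun ω => congrFun hfactor ω⟩
  cache_secrecy L hL := by
    refine indepFun_of_forall_exists_shift fun w => ?_
    obtain ⟨v, hv, hZ⟩ := hcache L hL w
    refine ⟨v, fun ω => by rw [map_add, hv], fun ω => funext fun k => ?_⟩
    rw [map_add, hZ k k.2, add_zero]
  delivery_secrecy D L hL := by
    refine indepFun_of_forall_exists_shift fun w => ?_
    obtain ⟨v, hv, hX, hZ⟩ := hdelivery D L hL
      (fun n => if hn : n ∉ L.image D then w ⟨n, hn⟩ else 0)
      fun k hk => dif_neg (not_not.2 (Finset.mem_image_of_mem D hk))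
    refine ⟨v, fun ω => funext fun n => ?_, fun ω =>
      Prod.ext (?_ : X D (ω + v) = X D ω) (funext fun k => (?_ : Z k (ω + v) = Z k ω))⟩
    · rw [map_add, hv, Pi.add_apply, Pi.add_apply, dif_pos n.2]
    · rw [map_add, hX, add_zero]
    · rw [map_add, hZ k k.2, add_zero]

end SecureScheme

section SecretSharing

/-- Privacy of a linear secret sharing scheme, given by its reconstruction map `ρ` from shares to
secrets: as `ρ` is additive, the shares in `S` reveal nothing about the secret exactly when every
secret has a vector of shares that vanishes on `S`. -/
def IsPrivate {ι R A : Type*} [AddCommGroup R] [AddCommGroup A] (ρ : (ι → R) →+ A)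
    (S : Set ι) : Prop :=
  ∀ a, ∃ s, ρ s = a ∧ ∀ i ∈ S, s i = 0

variable {𝔽 ι κ : Type*} [Field 𝔽] [Fintype ι] [DecidableEq ι]

/-- Reconstruction in Shamir's ramp scheme: the secrets are the values at the nodes `x (inr j)` of
the polynomial of degree less than `card ι` whose value at each node `x (inl i)` is the share of
index `i`. -/
noncomputable def shamirReconstruct (x : ι ⊕ κ → 𝔽) : (ι → 𝔽) →ₗ[𝔽] (κ → 𝔽) :=
  LinearMap.pi fun j =>
    Polynomial.leval (x (Sum.inr j)) ∘ₗ Lagrange.interpolate Finset.univ (x ∘ Sum.inl)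

lemma shamirReconstruct_eval {x : ι ⊕ κ → 𝔽} (hx : Function.Injective x) {p : Polynomial 𝔽}
    (hp : p.degree < Fintype.card ι) :
    shamirReconstruct x (fun i => p.eval (x (Sum.inl i))) = fun j => p.eval (x (Sum.inr j)) := by
  have hinterp := Lagrange.eq_interpolate (v := x ∘ Sum.inl) (s := Finset.univ)
    (hx.comp Sum.inl_injective).injOn hp
  funext j
  exact congrArg (Polynomial.eval (x (Sum.inr j))) hinterp.symm

lemma isPrivate_shamirReconstruct [Fintype κ] {x : ι ⊕ κ → 𝔽} (hx : Function.Injective x)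
    {S : Set ι} (hS : S.ncard + Fintype.card κ ≤ Fintype.card ι) :
    IsPrivate (shamirReconstruct x).toAddMonoidHom S := by
  classical
  intro w
  let nodes : Finset (ι ⊕ κ) := S.toFinset.disjSum Finset.univ
  let p := Lagrange.interpolate nodes x (Sum.elim 0 w)
  have hdeg : p.degree < Fintype.card ι := by
    refine (Lagrange.degree_interpolate_lt _ hx.injOn).trans_le ?_
    rw [Finset.card_disjSum, ← Set.ncard_eq_toFinset_card']
    exact_mod_cast hS
  have heval (i : ι ⊕ κ) (hi : i ∈ nodes) : p.eval (x i) = Sum.elim (0 : ι → 𝔽) w i :=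
    Lagrange.eval_interpolate_at_node _ hx.injOn hi
  refine ⟨fun i => p.eval (x (Sum.inl i)), (shamirReconstruct_eval hx hdeg).trans ?_,
    fun i hi => heval _ (Finset.inl_mem_disjSum.2 (Set.mem_toFinset.2 hi))⟩
  exact funext fun j => heval _ (Finset.inr_mem_disjSum.2 (Finset.mem_univ j))

end SecretSharing

section Subsets

variable {υ : Type*}

/-- The `t`-element sets of users that meet the coalition `L`. -/
def meeting (t : ℕ) (L : Finset υ) : Set (Set.powersetCard υ t) :=
  {T | ∃ k ∈ L, k ∈ T}

variable [Finite υ]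

lemma ncard_meeting_add_choose (t : ℕ) (L : Finset υ) :
    (meeting t L).ncard + (Nat.card υ - L.card).choose t = (Nat.card υ).choose t := by
  classical
  have := Fintype.ofFinite υ
  have compl_eq : (meeting t L)ᶜ = Subtype.val ⁻¹' (Lᶜ.powersetCard t : Set (Finset υ)) := by
    ext T
    have hT : T.1.card = t := T.2
    simp only [meeting, Set.mem_compl_iff, Set.mem_ofPred_eq, Set.mem_preimage, Finset.mem_coe,
      Finset.mem_powersetCard, hT, and_true, Finset.subset_iff, Finset.mem_compl, not_exists,
      not_and, Set.powersetCard.mem_coe_iff]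
    exact forall_congr' fun k => imp_not_comm
  have ncard_compl : (meeting t L)ᶜ.ncard = (Nat.card υ - L.card).choose t := by
    rw [compl_eq, Set.ncard_preimage_of_injective_subset_range Subtype.val_injective,
      Set.ncard_coe_finset, Finset.card_powersetCard, Finset.card_compl, Nat.card_eq_fintype_card]
    exact fun T hT => ⟨⟨T, (Finset.mem_powersetCard.1 hT).2⟩, rfl⟩
  rw [← ncard_compl, Set.ncard_add_ncard_compl, Set.powersetCard.card]

-- Only an inequality, since `t - 1` is truncated at `t = 0`.
lemma card_powersetCard_mem_le (t : ℕ) (k : υ) :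
    Nat.card {T : Set.powersetCard υ t // k ∈ T} ≤ (Nat.card υ - 1).choose (t - 1) := by
  have hmeet : {T : Set.powersetCard υ t | k ∈ T} = meeting t {k} := by
    simp only [meeting, Finset.mem_singleton, exists_eq_left]
  have hcount : Nat.card {T : Set.powersetCard υ t // k ∈ T} + (Nat.card υ - 1).choose t =
      (Nat.card υ).choose t := by
    rw [← ncard_meeting_add_choose t {k}, Finset.card_singleton, ← hmeet]
    rfl
  obtain ⟨n, hn⟩ := Nat.exists_eq_add_one.2 (Nat.card_pos_iff.2 ⟨⟨k⟩, ‹Finite υ›⟩)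
  rw [hn, Nat.add_sub_cancel] at hcount ⊢
  cases t with
  | zero => simp only [Nat.choose_zero_right] at hcount; omega
  | succ t => rw [Nat.choose_succ_succ] at hcount; exact (add_right_cancel hcount).le

end Subsets

section Scheme

/-- The sample space of the scheme: for every file a share for each set of `t` users, and a key
for each set of `t + 1` users. -/
abbrev Sample (R ν υ : Type*) (t : ℕ) : Type _ :=
  (ν → Set.powersetCard υ t → R) × (Set.powersetCard υ (t + 1) → R)

/-- The shares and the keys of a sample whose index contains the user `k`. -/
abbrev CacheContent (R ν : Type*) {υ : Type*} (t : ℕ) (k : υ) : Type _ :=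
  (ν × {T : Set.powersetCard υ t // k ∈ T} → R) × ({B : Set.powersetCard υ (t + 1) // k ∈ B} → R)

lemma card_cacheContent_le {R ν υ : Type*} [Nonempty R] [Finite R] [Finite ν] [Finite υ] (t : ℕ)
    (k : υ) :
    Nat.card (CacheContent R ν t k) ≤ Nat.card R ^
      (Nat.card ν * (Nat.card υ - 1).choose (t - 1) + (Nat.card υ - 1).choose t) := by
  rw [Nat.card_prod, Nat.card_fun, Nat.card_fun, Nat.card_prod, ← pow_add]
  gcongr
  · exact Nat.card_pos
  · exact card_powersetCard_mem_le t k
  · exact card_powersetCard_mem_le (t + 1) k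

variable {R ν υ : Type*} [AddCommGroup R] {t : ℕ}

/-- The cache of user `k`. -/
def cache (k : υ) : Sample R ν υ t →+ CacheContent R ν t k where
  toFun ω := (fun i => ω.1 i.1 i.2.1, fun B => ω.2 B.1)
  map_zero' := rfl
  map_add' _ _ := rfl

variable {A : Type*} [AddCommGroup A]

/-- The files of a sample, for a secret sharing scheme with reconstruction map `ρ`. -/
def files (ρ : (Set.powersetCard υ t → R) →+ A) : Sample R ν υ t →+ (ν → A) where
  toFun ω n := ρ (ω.1 n)
  map_zero' := funext fun _ => map_zero ρ
  map_add' _ _ := funext fun _ => map_add ρ _ _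

variable {ρ : (Set.powersetCard υ t → R) →+ A} {L : Finset υ}

lemma cache_eq_zero {v : Sample R ν υ t} (hs : ∀ n, ∀ T ∈ meeting t L, v.1 n T = 0)
    (hq : ∀ B ∈ meeting (t + 1) L, v.2 B = 0) {k : υ} (hk : k ∈ L) : cache k v = 0 :=
  Prod.ext (funext fun i => hs i.1 i.2.1 ⟨k, hk, i.2.2⟩)
    (funext fun B => hq B.1 ⟨k, hk, B.2⟩)

lemma exists_files_eq_cache_eq_zero (hρ : IsPrivate ρ (meeting t L)) (w : ν → A) :
    ∃ v : Sample R ν υ t, files ρ v = w ∧ ∀ k ∈ L, cache k v = 0 := by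
  choose s hsw hs using fun n => hρ (w n)
  exact ⟨(s, 0), funext hsw, fun k hk => cache_eq_zero hs (fun _ _ => rfl) hk⟩

variable [DecidableEq υ]

/-- The set `B` without its element `k`. -/
def eraseUser (B : Set.powersetCard υ (t + 1)) (k : B.1) : Set.powersetCard υ t :=
  ⟨B.1.erase k, by
    rw [Set.powersetCard.mem_iff, Finset.card_erase_of_mem k.2, B.2, Nat.add_sub_cancel]⟩

/-- The sum over the users `k` of `B` of the share that `k` requests and that all others in `B`
have cached. -/
def payload (D : υ → ν) (s : ν → Set.powersetCard υ t → R) (B : Set.powersetCard υ (t + 1)) : R :=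
  ∑ k : B.1, s (D k) (eraseUser B k)

/-- The broadcast for the demand `D`: each payload, masked by its key. -/
def broadcast (D : υ → ν) : Sample R ν υ t →+ (Set.powersetCard υ (t + 1) → R) where
  toFun ω B := ω.2 B + payload D ω.1 B
  map_zero' := by ext; simp [payload]
  map_add' ω ω' := by
    ext B
    simp only [payload, Prod.fst_add, Prod.snd_add, Pi.add_apply, Finset.sum_add_distrib]
    exact add_add_add_comm _ _ _ _

lemma payload_insert_eq (D : υ → ν) {s : ν → Set.powersetCard υ t → R} {k : υ}
    (hs : ∀ n (T : Set.powersetCard υ t), k ∈ T → s n T = 0) {T : Set.powersetCard υ t}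
    {B : Set.powersetCard υ (t + 1)} (hT : k ∉ T) (hB : B.1 = insert k T.1) :
    payload D s B = s (D k) T := by
  have hkB : k ∈ B.1 := hB ▸ Finset.mem_insert_self k T.1
  have erase_eq : eraseUser B ⟨k, hkB⟩ = T :=
    Subtype.ext ((congrArg (Finset.erase · k) hB).trans (Finset.erase_insert hT))
  rw [payload, Fintype.sum_eq_single ⟨k, hkB⟩, erase_eq]
  intro j hj
  exact hs _ _ (Finset.mem_erase.2 ⟨fun hkj => hj (Subtype.ext hkj.symm), hkB⟩)

lemma requested_shares_eq_zero {D : υ → ν} {k : υ} {v : Sample R ν υ t} (hZ : cache k v = 0)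
    (hX : broadcast D v = 0) : v.1 (D k) = 0 := by
  have share_eq_zero (n : ν) (T : Set.powersetCard υ t) (hT : k ∈ T) : v.1 n T = 0 :=
    congrFun (congrArg Prod.fst hZ) (n, ⟨T, hT⟩)
  funext T
  by_cases hT : k ∈ T
  · exact share_eq_zero _ T hT
  let B : Set.powersetCard υ (t + 1) :=
    ⟨insert k T.1, (Finset.card_insert_of_notMem hT).trans (congrArg (· + 1) T.2)⟩
  have key_eq_zero : v.2 B = 0 :=
    congrFun (congrArg Prod.snd hZ) ⟨B, Finset.mem_insert_self k T.1⟩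
  have masked_eq_zero : v.2 B + payload D v.1 B = 0 := congrFun hX B
  rwa [key_eq_zero, zero_add, payload_insert_eq D share_eq_zero hT rfl] at masked_eq_zero

lemma payload_eq_zero {D : υ → ν} {s : ν → Set.powersetCard υ t → R}
    (hs : ∀ n, ∀ T ∈ meeting t L, s n T = 0) (hD : ∀ k ∈ L, s (D k) = 0)
    {B : Set.powersetCard υ (t + 1)} (hB : B ∈ meeting (t + 1) L) : payload D s B = 0 := by
  obtain ⟨j, hjL, hjB⟩ := hB
  refine Finset.sum_eq_zero fun k _ => ?_
  by_cases hk : k.1 ∈ L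
  · rw [hD _ hk, Pi.zero_apply]
  · exact hs _ _ ⟨j, hjL, Finset.mem_erase.2 ⟨fun hjk => hk (hjk ▸ hjL), hjB⟩⟩

lemma exists_files_eq_broadcast_eq_zero (hρ : IsPrivate ρ (meeting t L)) (D : υ → ν) {w : ν → A}
    (hw : ∀ k ∈ L, w (D k) = 0) :
    ∃ v : Sample R ν υ t, files ρ v = w ∧ broadcast D v = 0 ∧ ∀ k ∈ L, cache k v = 0 := by
  have hshares (n : ν) :
      ∃ s, ρ s = w n ∧ (∀ T ∈ meeting t L, s T = 0) ∧ ∀ k ∈ L, D k = n → s = 0 := by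
    by_cases hn : ∃ k ∈ L, D k = n
    · obtain ⟨k, hk, rfl⟩ := hn
      exact ⟨0, by rw [map_zero, hw k hk], fun _ _ => rfl, fun _ _ _ => rfl⟩
    · obtain ⟨s, hsw, hs⟩ := hρ (w n)
      exact ⟨s, hsw, hs, fun k hk hkn => (hn ⟨k, hk, hkn⟩).elim⟩
  choose s hsw hs hD using hshares
  refine ⟨(s, -payload D s), funext hsw, ?_, fun k hk => cache_eq_zero hs (fun B hB => ?_) hk⟩
  · exact funext fun B => neg_add_cancel (payload D s B)
  · exact neg_eq_zero.2 (payload_eq_zero hs (fun k hk => hD _ k hk rfl) hB)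

theorem isSecureScheme_of_isPrivate [Fintype υ] [Fintype ν] [DecidableEq ν] [Fintype R] [Fintype A]
    [MeasurableSpace R] [DiscreteMeasurableSpace R] [MeasurableSpace A] [DiscreteMeasurableSpace A]
    {l : ℕ} (hl : l ≤ Fintype.card υ)
    (hρ : ∀ L : Finset υ, L.card = l → IsPrivate ρ (meeting t L)) :
    IsSecureScheme l (PMF.uniformOfFintype (Sample R ν υ t)).toMeasure (files ρ)
      (fun k => cache k) (fun D => broadcast D) := by
  refine isSecureScheme_of_addMonoidHom (fun w => ?_) (fun D k v hZ hX => ?_)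
    (fun L hL => exists_files_eq_cache_eq_zero (hρ L hL))
    fun D L hL _ => exists_files_eq_broadcast_eq_zero (hρ L hL) D
  · obtain ⟨L, -, hL⟩ := Finset.exists_subset_card_eq (s := (Finset.univ : Finset υ)) hl
    exact (exists_files_eq_cache_eq_zero (hρ L hL) w).imp fun _ => And.left
  · exact (congrArg ρ (requested_shares_eq_zero hZ hX)).trans (map_zero ρ)

end Scheme

lemma exists_field_card {q : ℕ} (hq : IsPrimePow q) :
    ∃ (𝔽 : Type) (_ : Field 𝔽) (_ : Fintype 𝔽), Fintype.card 𝔽 = q := by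
  obtain ⟨hfield⟩ := Fintype.nonempty_field_iff.2 (show IsPrimePow (Fintype.card (Fin q)) by simpa)
  exact ⟨Fin q, hfield, inferInstance, Fintype.card_fin q⟩

theorem isSecureScheme_shamir {𝔽 ν υ κ : Type*} [Field 𝔽] [Fintype 𝔽] [MeasurableSpace 𝔽]
    [DiscreteMeasurableSpace 𝔽] [Fintype ν] [DecidableEq ν] [Fintype υ] [DecidableEq υ]
    [Fintype κ] [DecidableEq κ] {l t : ℕ} (hl : l ≤ Fintype.card υ)
    (hκ : Fintype.card κ ≤ (Fintype.card υ - l).choose t)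
    {x : Set.powersetCard υ t ⊕ κ → 𝔽} (hx : Function.Injective x) :
    IsSecureScheme l (PMF.uniformOfFintype (Sample 𝔽 ν υ t)).toMeasure
      (files (shamirReconstruct x).toAddMonoidHom) (fun k => cache k) (fun D => broadcast D) := by
  refine isSecureScheme_of_isPrivate hl fun L hL => isPrivate_shamirReconstruct hx ?_
  have hcount := ncard_meeting_add_choose t L
  rw [hL, ← Set.powersetCard.card, Nat.card_eq_fintype_card, Nat.card_eq_fintype_card] at hcount
  exact (Nat.add_le_add_left hκ _).trans hcount.le

end SecureCodedCaching

open SecureCodedCaching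

/-- `q` is the size of the field the scheme works over, and `a`, `b`, `c` are the sizes of the
alphabets of files, broadcasts and caches. -/
theorem secure_coded_caching_inner_bound_general (K N l t q a b c : ℕ) [NeZero a] (hlK : l ≤ K)
    (hq : IsPrimePow q) (hnodes : K.choose t + (K - l).choose t ≤ q)
    (ha : q ^ (K - l).choose t = a) (hb : q ^ K.choose (t + 1) ≤ b)
    (hc : q ^ (N * (K - 1).choose (t - 1) + (K - 1).choose t) ≤ c) :
    ∃ (Ω : Type) (_ : Fintype Ω) (_ : MeasurableSpace Ω) (μ : Measure Ω)
      (_ : IsProbabilityMeasure μ) (W : Ω → Fin N → Fin a) (Z : Fin K → Ω → Fin c)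
      (X : (Fin K → Fin N) → Ω → Fin b), IsSecureScheme l μ W Z X := by
  classical
  obtain ⟨𝔽, _, _, rfl⟩ := exists_field_card hq
  let _ : MeasurableSpace 𝔽 := ⊤
  obtain ⟨x⟩ : Nonempty (Set.powersetCard (Fin K) t ⊕ Fin ((K - l).choose t) ↪ 𝔽) := by
    apply Function.Embedding.nonempty_of_card_le
    rwa [Fintype.card_sum, ← Nat.card_eq_fintype_card, Set.powersetCard.card, Nat.card_fin,
      Fintype.card_fin]
  have fileCode : (Fin ((K - l).choose t) → 𝔽) ≃ Fin a :=
    Finite.equivFinOfCardEq (by simpa using ha)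
  have cacheCode (k : Fin K) : CacheContent 𝔽 (Fin N) t k ↪ Fin c :=
    (Finite.equivFin _).toEmbedding.trans <| Fin.castLEEmb <|
      (card_cacheContent_le t k).trans (by simpa using hc)
  have broadcastCode : (Set.powersetCard (Fin K) (t + 1) → 𝔽) ↪ Fin b :=
    (Finite.equivFin _).toEmbedding.trans <| Fin.castLEEmb <| by
      rwa [Nat.card_fun, Set.powersetCard.card, Nat.card_fin, Nat.card_eq_fintype_card]
  exact ⟨Sample 𝔽 (Fin N) (Fin K) t, inferInstance, inferInstance, _, inferInstance, _, _, _,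
    (isSecureScheme_shamir (by simpa using hlK) (by simp) x.injective).encode
      fileCode cacheCode broadcastCode⟩

/-- **Theorem 1 (inner bound / achievability).**
For `K, N` positive, `l ∈ {1,…,K−1}`, `t ∈ {0,…,max(⌈(K+1)/l⌉−2,0)}`,
`P = C(K−l,t)`, `G = C(K,t)`, `Q = G − P`, `m` with `2^m ≥ 2G`, and `F = m·P`,
there is a finite probability space carrying files `W` uniform on `(Fin 2^F)^N`,
caches `Z k` with alphabet of size `2^{m(N·C(K−1,t−1)+C(K−1,t))}`, and broadcasts
`X D` with alphabet of size `2^{m·C(K,t+1)}`, satisfying correctness, cache secrecy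
and delivery secrecy against any `l` colluding users. -/
theorem secure_coded_caching_inner_bound
    (K N l t m : ℕ) (hK : 0 < K) (hN : 0 < N)
    (hl : 1 ≤ l) (hlK : l ≤ K - 1)
    (ht : (t : ℤ) ≤ max (⌈((K : ℚ) + 1) / (l : ℚ)⌉ - 2) 0)
    (hm : 0 < m) (hm2 : 2 * Nat.choose K t ≤ 2 ^ m) :
    ∃ (Ω : Type) (_ : Fintype Ω) (_ : MeasurableSpace Ω) (μ : Measure Ω)
      (_ : IsProbabilityMeasure μ)
      (W : Ω → (Fin N → Fin (2 ^ (m * Nat.choose (K - l) t))))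
      (Z : Fin K → Ω → Fin (2 ^ (m * (N * Nat.choose (K - 1) (t - 1) + Nat.choose (K - 1) t))))
      (X : (Fin K → Fin N) → Ω → Fin (2 ^ (m * Nat.choose K (t + 1)))),
      -- the files are uniformly distributed
      Measure.map W μ
        = (PMF.uniformOfFintype (Fin N → Fin (2 ^ (m * Nat.choose (K - l) t)))).toMeasure ∧
      -- (i) correctness: user `k` decodes his requested file from `(Z k, X D)`
      (∀ (D : Fin K → Fin N) (k : Fin K),
        ∃ μkD : Fin (2 ^ (m * (N * Nat.choose (K - 1) (t - 1) + Nat.choose (K - 1) t))) ×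
                  Fin (2 ^ (m * Nat.choose K (t + 1))) →
                Fin (2 ^ (m * Nat.choose (K - l) t)),
          (fun ω => W ω (D k)) =ᵐ[μ] fun ω => μkD (Z k ω, X D ω)) ∧
      -- (ii) cache secrecy against any `l` colluding users
      (∀ L : Finset (Fin K), L.card = l →
        IndepFun (fun ω (k : L) => Z k ω) W μ) ∧
      -- (iii) delivery secrecy against any `l` colluding users
      (∀ (D : Fin K → Fin N) (L : Finset (Fin K)), L.card = l →
        IndepFun (fun ω => (X D ω, fun k : L => Z k ω))
          (fun ω (n : {n : Fin N // n ∉ L.image D}) => W ω (n : Fin N)) μ) := by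
  obtain ⟨Ω, hfin, hmeas, μ, hμ, W, Z, X, h⟩ :=
    secure_coded_caching_inner_bound_general K N l t (2 ^ m) _ _ _ (by omega)
      (Nat.prime_two.isPrimePow.pow hm.ne') (by linarith [Nat.choose_le_choose t (Nat.sub_le K l)])
      (pow_mul _ _ _).symm (pow_mul _ _ _).ge (pow_mul _ _ _).ge
  exact ⟨Ω, hfin, hmeas, μ, hμ, W, Z, X,
    h.map_files, h.correct, h.cache_secrecy, h.delivery_secrecy⟩
end

section
/- Let N, K, F be positive integers, l ∈ {1,…,K−1}, and M, R ≥ 0 real. Suppose on a probability space there are random variables W = (W_1,…,W_N) uniformly distributed on (Fin 2^F)^N, caches Z_1,…,Z_K each valued in Fin 2^{⌊MF⌋}, and for every demand vector D ∈ (Fin N)^K a broadcast X_D valued in Fin 2^{⌊RF⌋}, such that: (i) for every D and k there is a function μ_{k,D} with W_{D(k)} = μ_{k,D}(Z_k, X_D) almost surely; and (ii) for every D and every L ⊆ {1,…,K} with |L| = l, the pair (X_D, (Z_k)_{k∈L}) is independent of the tuple (W_n)_{n ∉ {D(k):k∈L}}. Then for every integer s with l ≤ s ≤ min(⌊N/2⌋,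 K), we have (⌊N/s⌋ − 1)·⌊RF⌋ + (s − l)·⌊MF⌋ ≥ (s·⌊N/s⌋ − l)·F; in particular (⌊N/s⌋ − 1)·R + (s − l)·M ≥ s·⌊N/s⌋ − l. -/
open MeasureTheory ProbabilityTheory

/-!
Fix a set `S` of `s` users, `l` of which collude, and `q = ⌊N/s⌋` demand vectors under which `S`
requests `s * q` distinct files. By secrecy, some value of the first broadcast together with the `l`
colluding caches is compatible with every value of the `s * q - l` requested files that the
colluders did not ask for in the first round. Once this value is fixed, these files are determined
by the other `q - 1` broadcasts and the other `s - l` caches, so counting values gives the bound.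
Only possible values are counted, so no entropy is needed.
-/

section Probability

variable {Ω α β : Type*} [MeasurableSpace Ω] {μ : Measure Ω}
  [MeasurableSpace α] [MeasurableSingletonClass α]

theorem measure_preimage_singleton_ne_zero_of_map_eq {f : Ω → α} {p : PMF α}
    (hf : μ.map f = p.toMeasure) {a : α} (ha : a ∈ p.support) : μ (f ⁻¹' {a}) ≠ 0 := by
  have : NeZero (μ.map f) := hf ▸ inferInstance
  rw [← Measure.map_apply_of_aemeasurable (aemeasurable_of_map_neZero this)
    (measurableSet_singleton a), hf, p.toMeasure_apply_singleton a (measurableSet_singleton a)]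
  exact (p.mem_support_iff a).1 ha

theorem exists_forall_frequently_eq_of_indepFun [NeZero μ] [Countable α]
    [MeasurableSpace β] [MeasurableSingletonClass β] {f : Ω → α} {g : Ω → β}
    (hfg : IndepFun f g μ) :
    ∃ a, ∀ b, μ (g ⁻¹' {b}) ≠ 0 → ∃ᵐ ω ∂μ, f ω = a ∧ g ω = b := by
  obtain ⟨a, ha⟩ : ∃ a, 0 < μ (f ⁻¹' {a}) :=
    exists_pos_measure_of_cover
      (by rw [← Set.preimage_iUnion, Set.iUnion_of_singleton, Set.preimage_univ])
      (NeZero.ne μ)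
  refine ⟨a, fun b hb => frequently_ae_iff.2 ?_⟩
  have hmul := hfg.measure_inter_preimage_eq_mul _ _ (measurableSet_singleton a)
    (measurableSet_singleton b)
  exact hmul.trans_ne (mul_ne_zero ha.ne' hb)

end Probability

section Counting

theorem card_le_card_of_determined {Ω α β : Type*} [Fintype α] [Fintype β] {p : Ω → Prop}
    {f : Ω → α} {g : Ω → β} (hf : ∀ a, ∃ ω, p ω ∧ f ω = a)
    (hfg : ∀ ω ω', p ω → p ω' → g ω = g ω' → f ω = f ω') :
    Fintype.card α ≤ Fintype.card β := by
  choose ω hp hω using hf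
  refine Fintype.card_le_of_injective (g ∘ ω) fun a b hab => ?_
  rw [← hω a, ← hω b, hfg _ _ (hp a) (hp b) hab]

theorem exists_demands_card_mul_le {ι κ J : Type*} [Fintype ι] [Nonempty ι] [DecidableEq ι]
    [Fintype J] (S : Finset κ) (h : S.card * Fintype.card J ≤ Fintype.card ι) :
    ∃ D : J → κ → ι, S.card * Fintype.card J ≤
      (Finset.univ.biUnion fun j => S.image (D j)).card := by
  obtain ⟨e⟩ : Nonempty ((Finset.univ ×ˢ S : Finset (J × κ)) ↪ ι) :=
    Function.Embedding.nonempty_of_card_le <| by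
      rwa [Fintype.card_coe, Finset.card_product, Finset.card_univ, mul_comm]
  obtain ⟨f, hf⟩ := Set.exists_injOn_iff_injective.2 ⟨e, e.injective⟩
  refine ⟨fun j k => f (j, k), ?_⟩
  calc S.card * Fintype.card J = (Finset.univ ×ˢ S : Finset (J × κ)).card := by
        rw [Finset.card_product, Finset.card_univ, mul_comm]
    _ = ((Finset.univ ×ˢ S).image f).card := (Finset.card_image_of_injOn hf).symm
    _ ≤ _ := Finset.card_le_card fun n hn => by simpa using hn

theorem mul_le_add_of_pow_le_pow_mul_pow {d a b c F r m n i j : ℕ} (hd : 1 < d)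
    (ha : d ^ F ≤ a) (hb : b ≤ d ^ r) (hc : c ≤ d ^ m) (h : a ^ n ≤ b ^ i * c ^ j) :
    n * F ≤ i * r + j * m := by
  refine (Nat.pow_le_pow_iff_right hd).1 ?_
  calc d ^ (n * F) = (d ^ F) ^ n := by rw [mul_comm, pow_mul]
    _ ≤ a ^ n := by gcongr
    _ ≤ b ^ i * c ^ j := h
    _ ≤ (d ^ r) ^ i * (d ^ m) ^ j := by gcongr
    _ = d ^ (i * r + j * m) := by rw [pow_add, mul_comm i, mul_comm j, pow_mul, pow_mul]

theorem cast_le_of_mul_le_mul_floor {n i j F : ℕ} {M R : ℝ} (hF : 0 < F) (hM : 0 ≤ M)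
    (hR : 0 ≤ R) (h : n * F ≤ i * ⌊R * F⌋₊ + j * ⌊M * F⌋₊) : (n : ℝ) ≤ i * R + j * M := by
  refine le_of_mul_le_mul_right ?_ (Nat.cast_pos.2 hF : (0 : ℝ) < F)
  calc (n : ℝ) * F ≤ i * ⌊R * F⌋₊ + j * ⌊M * F⌋₊ := by exact_mod_cast h
    _ ≤ i * (R * F) + j * (M * F) := by gcongr <;> exact Nat.floor_le (by positivity)
    _ = (i * R + j * M) * F := by ring

end Counting

section Scheme

variable {Ω ι κ A B C : Type*} [MeasurableSpace Ω] [DecidableEq ι]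
  [MeasurableSpace A] [MeasurableSpace B] [MeasurableSpace C]

/-- A coded caching scheme that is correct and secret against any `l` colluding users. The files
are indexed by `ι`, the users by `κ`; `A`, `B` and `C` are the alphabets of the files, broadcasts
and caches. The joint distribution of the files is left arbitrary. -/
structure IsSecureCodedCaching (μ : Measure Ω) (W : Ω → ι → A) (Z : κ → Ω → C)
    (X : (κ → ι) → Ω → B) (l : ℕ) : Prop where
  correct : ∀ (D : κ → ι) (k : κ), ∃ dec : C × B → A,
    (fun ω => W ω (D k)) =ᵐ[μ] fun ω => dec (Z k ω, X D ω)
  secret : ∀ (D : κ → ι) (L : Finset κ), L.card = l →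
    IndepFun (fun ω => (X D ω, fun k : L => Z k ω))
      (fun ω (n : {n : ι // n ∉ L.image D}) => W ω (n : ι)) μ

namespace IsSecureCodedCaching

variable {μ : Measure Ω} {W : Ω → ι → A} {Z : κ → Ω → C} {X : (κ → ι) → Ω → B} {l : ℕ}

theorem exists_decoder {J : Type*} [Countable J] [Countable κ]
    (h : IsSecureCodedCaching μ W Z X l) (D : J → κ → ι) :
    ∃ dec : J → κ → C × B → A,
      ∀ᵐ ω ∂μ, ∀ j k, W ω (D j k) = dec j k (Z k ω, X (D j) ω) := by
  choose dec hdec using fun j k => h.correct (D j) k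
  exact ⟨dec, ae_all_iff.2 fun j => ae_all_iff.2 fun k => hdec j k⟩

variable [MeasurableSingletonClass A] [MeasurableSingletonClass B] [MeasurableSingletonClass C]

theorem exists_forall_frequently_unrequested_eq [NeZero μ] [Countable ι] [Countable B]
    [Countable C] (h : IsSecureCodedCaching μ W Z X l) (hW : ∀ w, μ (W ⁻¹' {w}) ≠ 0)
    (D : κ → ι) {L : Finset κ} (hL : L.card = l) :
    ∃ (x : B) (z : L → C), ∀ w : ι → A, ∃ᵐ ω ∂μ,
      X D ω = x ∧ (∀ k : L, Z k ω = z k) ∧ ∀ n ∉ L.image D, W ω n = w n := by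
  obtain ⟨⟨x, z⟩, hxz⟩ := exists_forall_frequently_eq_of_indepFun (h.secret D L hL)
  refine ⟨x, z, fun w => ?_⟩
  have hw : μ ((fun ω (n : {n : ι // n ∉ L.image D}) => W ω n) ⁻¹'
      {fun n : {n : ι // n ∉ L.image D} => w n}) ≠ 0 :=
    fun h0 => hW w (measure_mono_null (by rintro ω rfl; rfl) h0)
  refine (hxz _ hw).mono fun ω ⟨hXZ, hWω⟩ => ?_
  obtain ⟨hX, hZ⟩ := Prod.mk.inj hXZ
  exact ⟨hX, congrFun hZ, fun n hn => congrFun hWω ⟨n, hn⟩⟩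

theorem card_pow_card_requested_sdiff_le [NeZero μ] {J : Type*} [Fintype J] [Countable ι]
    [Countable κ] [Fintype A] [Fintype B] [Fintype C] (h : IsSecureCodedCaching μ W Z X l)
    (hW : ∀ w, μ (W ⁻¹' {w}) ≠ 0) {L S : Finset κ} (hL : L.card = l) (hLS : L ⊆ S)
    (D : J → κ → ι) (j₀ : J) :
    Fintype.card A ^ ((Finset.univ.biUnion fun j => S.image (D j)) \ L.image (D j₀)).card ≤
      Fintype.card B ^ (Fintype.card J - 1) * Fintype.card C ^ (S.card - l) := by
  classical
  set T := (Finset.univ.biUnion fun j => S.image (D j)) \ L.image (D j₀)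
  obtain ⟨dec, hdec⟩ := h.exists_decoder D
  obtain ⟨x, z, hxz⟩ := h.exists_forall_frequently_unrequested_eq hW (D j₀) hL
  let consistent (ω : Ω) : Prop := (∀ j k, W ω (D j k) = dec j k (Z k ω, X (D j) ω)) ∧
    X (D j₀) ω = x ∧ ∀ k : L, Z k ω = z k
  let files (ω : Ω) (n : T) : A := W ω n
  let observed (ω : Ω) : ({j // j ≠ j₀} → B) × ((S \ L : Finset κ) → C) :=
    (fun j => X (D j) ω, fun k => Z k ω)
  have files_surjective (a : T → A) : ∃ ω, consistent ω ∧ files ω = a := by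
    obtain ⟨ω₀⟩ := μ.nonempty_of_neZero
    obtain ⟨ω, ⟨hX, hZ, hWω⟩, hω⟩ :=
      ((hxz (Function.extend Subtype.val a (W ω₀))).and_eventually hdec).exists
    refine ⟨ω, ⟨hω, hX, hZ⟩, funext fun n => ?_⟩
    rw [← Subtype.val_injective.extend_apply a (W ω₀) n]
    exact hWω n (Finset.mem_sdiff.1 n.2).2
  have files_determined (ω ω') : consistent ω → consistent ω' → observed ω = observed ω' →
      files ω = files ω' := by
    rintro ⟨hω, hX, hZ⟩ ⟨hω', hX', hZ'⟩ hobs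
    obtain ⟨hobsX, hobsZ⟩ := Prod.mk.inj hobs
    have hXeq (j : J) : X (D j) ω = X (D j) ω' := by
      rcases eq_or_ne j j₀ with rfl | hj
      · exact hX.trans hX'.symm
      · exact congrFun hobsX ⟨j, hj⟩
    have hZeq (k : κ) (hk : k ∈ S) : Z k ω = Z k ω' := by
      by_cases hkL : k ∈ L
      · exact (hZ ⟨k, hkL⟩).trans (hZ' ⟨k, hkL⟩).symm
      · exact congrFun hobsZ ⟨k, Finset.mem_sdiff.2 ⟨hk, hkL⟩⟩
    funext ⟨n, hn⟩
    obtain ⟨j, k, hk, rfl⟩ : ∃ j, ∃ k ∈ S, D j k = n := by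
      simpa using (Finset.mem_sdiff.1 hn).1
    change W ω (D j k) = W ω' (D j k)
    rw [hω, hω', hXeq, hZeq k hk]
  simpa [Finset.card_sdiff_of_subset hLS, hL, Fintype.card_subtype_compl] using
    card_le_card_of_determined files_surjective files_determined

theorem card_pow_mul_sub_le [NeZero μ] [Fintype ι] [Fintype κ] [Fintype A] [Fintype B]
    [Fintype C] (h : IsSecureCodedCaching μ W Z X l) (hW : ∀ w, μ (W ⁻¹' {w}) ≠ 0) {s q : ℕ}
    (hs : 0 < s) (hq : 0 < q) (hls : l ≤ s) (hsκ : s ≤ Fintype.card κ)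
    (hsq : s * q ≤ Fintype.card ι) :
    Fintype.card A ^ (s * q - l) ≤ Fintype.card B ^ (q - 1) * Fintype.card C ^ (s - l) := by
  classical
  have : Nonempty ι := Fintype.card_pos_iff.1 ((Nat.mul_pos hs hq).trans_le hsq)
  have : Nonempty A := μ.nonempty_of_neZero.map fun ω => W ω (Classical.arbitrary ι)
  obtain ⟨S, -, rfl⟩ := Finset.exists_subset_card_eq (hsκ.trans_eq Finset.card_univ.symm)
  obtain ⟨L, hLS, hL⟩ := Finset.exists_subset_card_eq hls
  obtain ⟨D, hD⟩ := exists_demands_card_mul_le (J := Fin q) S (by simpa using hsq)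
  rw [Fintype.card_fin] at hD
  let j₀ : Fin q := ⟨0, hq⟩
  calc Fintype.card A ^ (S.card * q - l)
    _ ≤ Fintype.card A ^
          ((Finset.univ.biUnion fun j => S.image (D j)) \ L.image (D j₀)).card := by
        refine Nat.pow_le_pow_right Fintype.card_pos ?_
        have hLD : (L.image (D j₀)).card ≤ l := Finset.card_image_le.trans_eq hL
        exact (tsub_le_tsub hD hLD).trans (Finset.le_card_sdiff _ _)
    _ ≤ _ := by simpa using h.card_pow_card_requested_sdiff_le hW hL hLS D j₀

end IsSecureCodedCaching

theorem secure_coded_caching_outer_bound_general [Fintype ι] [Fintype κ] [Fintype A] [Fintype B]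
    [Fintype C] [MeasurableSingletonClass A] [MeasurableSingletonClass B]
    [MeasurableSingletonClass C] {F l : ℕ} {M R : ℝ} (hF : 0 < F) (hM : 0 ≤ M) (hR : 0 ≤ R)
    (hA : 2 ^ F ≤ Fintype.card A) (hB : Fintype.card B ≤ 2 ^ ⌊R * F⌋₊)
    (hC : Fintype.card C ≤ 2 ^ ⌊M * F⌋₊) {μ : Measure Ω} [NeZero μ] {W : Ω → ι → A}
    {Z : κ → Ω → C} {X : (κ → ι) → Ω → B} (hW : ∀ w, μ (W ⁻¹' {w}) ≠ 0)
    (h : IsSecureCodedCaching μ W Z X l) {s q : ℕ} (hs : 0 < s) (hq : 0 < q) (hls : l ≤ s)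
    (hsκ : s ≤ Fintype.card κ) (hsq : s * q ≤ Fintype.card ι) :
    (s * q - l) * F ≤ (q - 1) * ⌊R * F⌋₊ + (s - l) * ⌊M * F⌋₊ ∧
      (s : ℝ) * q - l ≤ ((q : ℝ) - 1) * R + ((s : ℝ) - l) * M := by
  have hbits : (s * q - l) * F ≤ (q - 1) * ⌊R * F⌋₊ + (s - l) * ⌊M * F⌋₊ :=
    mul_le_add_of_pow_le_pow_mul_pow one_lt_two hA hB hC
      (h.card_pow_mul_sub_le hW hs hq hls hsκ hsq)
  have hlsq : l ≤ s * q := hls.trans (Nat.le_mul_of_pos_right s hq)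
  refine ⟨hbits, ?_⟩
  simpa [Nat.cast_sub hlsq, Nat.cast_sub hls, Nat.cast_pred hq] using
    cast_le_of_mul_le_mul_floor hF hM hR hbits

end Scheme

/-- **Theorem 2, first case (outer bound).**
For a secure coded caching scheme with `N` files of `F` bits, `K` users with caches in
`Fin 2^{⌊MF⌋}`, broadcasts in `Fin 2^{⌊RF⌋}`, correctness and delivery secrecy against any
`l` colluding users, every integer `s` with `l ≤ s ≤ min(⌊N/2⌋, K)` satisfies
`(⌊N/s⌋−1)⌊RF⌋ + (s−l)⌊MF⌋ ≥ (s⌊N/s⌋−l)F`, and in particular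
`(⌊N/s⌋−1)R + (s−l)M ≥ s⌊N/s⌋ − l`. -/
theorem secure_coded_caching_outer_bound
    (N K F l : ℕ) (hN : 0 < N) (hK : 0 < K) (hF : 0 < F)
    (hl : 1 ≤ l) (hlK : l ≤ K - 1) (M R : ℝ) (hM : 0 ≤ M) (hR : 0 ≤ R)
    {Ω : Type*} [MeasurableSpace Ω] (μ : Measure Ω) [IsProbabilityMeasure μ]
    (W : Ω → (Fin N → Fin (2 ^ F)))
    (Z : Fin K → Ω → Fin (2 ^ ⌊M * F⌋₊))
    (X : (Fin K → Fin N) → Ω → Fin (2 ^ ⌊R * F⌋₊))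
    (hW : Measure.map W μ = (PMF.uniformOfFintype (Fin N → Fin (2 ^ F))).toMeasure)
    -- (i) correctness
    (hdec : ∀ (D : Fin K → Fin N) (k : Fin K),
      ∃ μkD : Fin (2 ^ ⌊M * F⌋₊) × Fin (2 ^ ⌊R * F⌋₊) → Fin (2 ^ F),
        (fun ω => W ω (D k)) =ᵐ[μ] fun ω => μkD (Z k ω, X D ω))
    -- (ii) delivery secrecy against any `l` colluding users
    (hsec : ∀ (D : Fin K → Fin N) (L : Finset (Fin K)), L.card = l →
      IndepFun (fun ω => (X D ω, fun k : L => Z k ω))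
        (fun ω (n : {n : Fin N // n ∉ L.image D}) => W ω (n : Fin N)) μ) :
    ∀ s : ℕ, l ≤ s → s ≤ min (N / 2) K →
      (N / s - 1) * ⌊R * F⌋₊ + (s - l) * ⌊M * F⌋₊ ≥ (s * (N / s) - l) * F ∧
      ((N / s : ℕ) - 1 : ℝ) * R + ((s : ℝ) - l) * M ≥ (s : ℝ) * (N / s : ℕ) - l := by
  intro s hls hsNK
  have hs : 0 < s := hl.trans hls
  exact secure_coded_caching_outer_bound_general hF hM hR (by simp) (by simp) (by simp)
    (fun w => measure_preimage_singleton_ne_zero_of_map_eq hW (by simp)) ⟨hdec, hsec⟩ hs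
    (Nat.div_pos (by omega) hs) hls (by simpa using hsNK.trans (min_le_right _ _))
    (by simpa using Nat.mul_div_le N s)
end

section
/- Let 𝔽 be a field, m a positive integer, and x, y : Fin m → 𝔽 injective functions such that x i + y j ≠ 0 for all i, j. Then the m × m matrix with (i,j) entry (x i + y j)⁻¹ has nonzero determinant; consequently every square submatrix of a Cauchy matrix (obtained by selecting any set of distinct rows and any equally sized set of distinct columns) is invertible. -/
/-!
A vector `c` in the kernel of a Cauchy matrix gives a rational function `∑ j, c j / (X + y j)`
that vanishes at every `x i`. Multiplied by `∏ j, (X + y j)` it becomes the Lagrange interpolant,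
at the nodes `-y j`, of the values `c j` divided by the (nonzero) nodal weights. The number
of its zeros `x i` exceeds its degree, so it is the zero polynomial, and `c = 0`.
-/

section PartialFractions

variable {ι κ K : Type*} [Field K] {s : Finset ι} {t : Finset κ} {v c : ι → K} {x : κ → K}

theorem eval_interpolate_div_nodalWeight [DecidableEq ι] (hv : Set.InjOn v s) {a : K}
    (ha : ∀ j ∈ s, a ≠ v j) :
    (Lagrange.interpolate s v fun j => c j / Lagrange.nodalWeight s v j).eval a =
      (Lagrange.nodal s v).eval a * ∑ j ∈ s, (a - v j)⁻¹ * c j := by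
  rw [Lagrange.eval_interpolate_not_at_node _ ha]
  congr 1
  refine Finset.sum_congr rfl fun j hj => ?_
  have hw : Lagrange.nodalWeight s v j ≠ 0 := Lagrange.nodalWeight_ne_zero hv hj
  field

theorem eq_zero_of_sum_inv_sub_mul_eq_zero (hv : Set.InjOn v s) (hx : Set.InjOn x t)
    (hst : s.card ≤ t.card) (hxv : ∀ i ∈ t, ∀ j ∈ s, x i ≠ v j)
    (hsum : ∀ i ∈ t, ∑ j ∈ s, (x i - v j)⁻¹ * c j = 0) :
    ∀ j ∈ s, c j = 0 := by
  classical
  intro j hj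
  let b : ι → K := fun j => c j / Lagrange.nodalWeight s v j
  let P := Lagrange.interpolate s v b
  have hdeg : P.degree < t.card :=
    (Lagrange.degree_interpolate_lt _ hv).trans_le (Nat.cast_le.mpr hst)
  have hroot : ∀ i ∈ t, P.eval (x i) = 0 := fun i hi => by
    rw [eval_interpolate_div_nodalWeight hv (hxv i hi), hsum i hi, mul_zero]
  have hP : P = 0 := Polynomial.eq_zero_of_degree_lt_of_eval_index_eq_zero _ hx hdeg hroot
  have hb : b j = 0 := calc
    b j = P.eval (v j) := (Lagrange.eval_interpolate_at_node b hv hj).symm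
    _ = 0 := by rw [hP, Polynomial.eval_zero]
  exact (div_eq_zero_iff.mp hb).resolve_right (Lagrange.nodalWeight_ne_zero hv hj)

end PartialFractions

section CauchyMatrix

variable {m n K : Type*} [Field K]

/-- The Cauchy matrix of two families `x` and `y`, possibly infinite and indexed by different
types. An entry with `x i + y j = 0` is `0`. -/
def cauchyMatrix (x : m → K) (y : n → K) : Matrix m n K :=
  Matrix.of fun i j => (x i + y j)⁻¹

theorem cauchyMatrix_submatrix {p q : Type*} (x : m → K) (y : n → K) (r : p → m) (c : q → n) :
    (cauchyMatrix x y).submatrix r c = cauchyMatrix (x ∘ r) (y ∘ c) :=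
  rfl

theorem cauchyMatrix_mulVec_injective [Fintype m] [Fintype n] {x : m → K} {y : n → K}
    (hx : Function.Injective x) (hy : Function.Injective y) (hxy : ∀ i j, x i + y j ≠ 0)
    (hcard : Fintype.card n ≤ Fintype.card m) :
    Function.Injective (cauchyMatrix x y).mulVec := by
  refine (injective_iff_map_eq_zero (cauchyMatrix x y).mulVecLin).mpr fun c hc => ?_
  have hsum (i : m) : ∑ j, (x i - -y j)⁻¹ * c j = 0 := by
    simp only [sub_neg_eq_add]
    exact congrFun hc i
  have hxv (i : m) (j : n) : x i ≠ -y j := fun h => hxy i j (eq_neg_iff_add_eq_zero.mp h)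
  funext j
  exact eq_zero_of_sum_inv_sub_mul_eq_zero (neg_injective.comp hy).injOn hx.injOn hcard
    (fun i _ j _ => hxv i j) (fun i _ => hsum i) j (Finset.mem_univ j)

theorem isUnit_cauchyMatrix [Fintype n] [DecidableEq n] {x y : n → K}
    (hx : Function.Injective x) (hy : Function.Injective y) (hxy : ∀ i j, x i + y j ≠ 0) :
    IsUnit (cauchyMatrix x y) :=
  Matrix.mulVec_injective_iff_isUnit.mp (cauchyMatrix_mulVec_injective hx hy hxy le_rfl)

theorem cauchy_matrix_det_ne_zero_and_submatrix_isUnit_general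
    [Fintype n] [DecidableEq n] {x y : n → K} (hx : Function.Injective x)
    (hy : Function.Injective y) (hxy : ∀ i j, x i + y j ≠ 0) :
    (cauchyMatrix x y).det ≠ 0 ∧
    ∀ {p q : Type*} {x' : p → K} {y' : q → K}, Function.Injective x' → Function.Injective y' →
      (∀ i j, x' i + y' j ≠ 0) →
      ∀ {r : n → p} {c : n → q}, Function.Injective r → Function.Injective c →
        IsUnit ((cauchyMatrix x' y').submatrix r c) := by
  refine ⟨?_, fun {_ _ _ _} hx' hy' hxy' {r c} hr hc => ?_⟩
  · exact ((Matrix.isUnit_iff_isUnit_det _).mp (isUnit_cauchyMatrix hx hy hxy)).ne_zero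
  · rw [cauchyMatrix_submatrix]
    exact isUnit_cauchyMatrix (hx'.comp hr) (hy'.comp hc) fun i j => hxy' (r i) (c j)

end CauchyMatrix

/-- **Cauchy matrices have nonzero determinant, hence every square submatrix of a
Cauchy matrix is invertible.** -/
theorem cauchy_matrix_det_ne_zero_and_submatrix_isUnit
    {𝔽 : Type*} [Field 𝔽] (m : ℕ) (hm : 0 < m)
    (x y : Fin m → 𝔽) (hx : Function.Injective x) (hy : Function.Injective y)
    (hxy : ∀ i j, x i + y j ≠ 0) :
    (Matrix.of fun i j : Fin m => (x i + y j)⁻¹).det ≠ 0 ∧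
    ∀ (G : ℕ) (x' y' : Fin G → 𝔽), Function.Injective x' → Function.Injective y' →
      (∀ i j, x' i + y' j ≠ 0) →
      ∀ (r c : Fin m → Fin G), Function.Injective r → Function.Injective c →
        IsUnit ((Matrix.of fun i j : Fin G => (x' i + y' j)⁻¹).submatrix r c) :=
  (cauchy_matrix_det_ne_zero_and_submatrix_isUnit_general hx hy hxy).imp_right
    fun hunit _ _ _ hx' hy' hxy' _ _ => hunit hx' hy' hxy'
end

section
/- Let 𝔽 be a finite field, P, Q positive integers, G = P + Q, and let C be a G × G matrix over 𝔽 every square submatrix of which is invertible (for instance a Cauchy matrix). On a probability space let W : Ω → 𝔽^P be any random variable and Y : Ω → 𝔽^Q be uniformly distributed and independent of W, and define the shares S_i = Σ_{p<P} C_{i,p}·W_p + Σ_{q<Q} C_{i,P+q}·Y_q for i ∈ Fin G. Then for every subset I ⊆ Fin G with |I| ≤ Q, the tuple (S_i)_{i∈I} is uniformly distributed on 𝔽^I and is independent of W. -/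
open MeasureTheory ProbabilityTheory

/-!
Two facts combine. A translation-invariant probability measure on a finite group is the uniform
one, so a surjective homomorphism carries the uniform law to the uniform law; invertible square
submatrices make the key symbols enter any `Q` shares surjectively. And on `α × G` the shear
`(x, u) ↦ (x, g x + u)` preserves `ν × υ` when `υ` is translation invariant, so a masked value
`g X + U` keeps the law of `U` and stays independent of `X` (the one-time pad).
-/

open scoped Matrix

section UniformLaw

theorem toMeasure_uniformOfFintype_eq_smul_count {α : Type*} [Fintype α] [Nonempty α]
    [MeasurableSpace α] [MeasurableSingletonClass α] :
    (PMF.uniformOfFintype α).toMeasure = (Fintype.card α : ENNReal)⁻¹ • Measure.count := by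
  refine Measure.ext_of_singleton fun a => ?_
  rw [PMF.toMeasure_apply_singleton _ _ (measurableSet_singleton a)]
  simp

variable {G : Type*} [AddGroup G] [Fintype G] [MeasurableSpace G] [MeasurableSingletonClass G]

instance isAddLeftInvariant_toMeasure_uniformOfFintype :
    (PMF.uniformOfFintype G).toMeasure.IsAddLeftInvariant := by
  rw [toMeasure_uniformOfFintype_eq_smul_count]
  infer_instance

theorem eq_toMeasure_uniformOfFintype_of_isAddLeftInvariant (ν : Measure G)
    [IsProbabilityMeasure ν] [ν.IsAddLeftInvariant] :
    ν = (PMF.uniformOfFintype G).toMeasure := by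
  have singleton_eq (x : G) : ν {x} = ν {0} := by
    simpa using measure_preimage_add ν (-x) {0}
  have mul_card : ν {0} * (Fintype.card G : ENNReal) = 1 := by
    calc ν {0} * (Fintype.card G : ENNReal) = ∑ x : G, ν {x} := by simp [singleton_eq, mul_comm]
      _ = 1 := by simp
  refine Measure.ext_of_singleton fun x => ?_
  rw [singleton_eq, PMF.toMeasure_apply_singleton _ _ (measurableSet_singleton x),
    PMF.uniformOfFintype_apply]
  exact ENNReal.eq_inv_of_mul_eq_one_left mul_card

theorem map_toMeasure_uniformOfFintype_of_surjective {H : Type*} [AddGroup H] [Fintype H]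
    [MeasurableSpace H] [MeasurableSingletonClass H] (f : G →+ H) (hf : Function.Surjective f) :
    (PMF.uniformOfFintype G).toMeasure.map f = (PMF.uniformOfFintype H).toMeasure := by
  have hfm : Measurable f := measurable_of_countable f
  have : IsProbabilityMeasure ((PMF.uniformOfFintype G).toMeasure.map f) :=
    Measure.isProbabilityMeasure_map hfm.aemeasurable
  have : ((PMF.uniformOfFintype G).toMeasure.map f).IsAddLeftInvariant :=
    isAddLeftInvariant_map f.toAddHom hfm hf
  exact eq_toMeasure_uniformOfFintype_of_isAddLeftInvariant _

end UniformLaw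

section OneTimePad

variable {α G Ω : Type*} [MeasurableSpace α] [MeasurableSpace G] [Add G] [MeasurableAdd₂ G]
  [MeasurableSpace Ω]

theorem measurePreserving_prodMk_fst_add (ν : Measure α) (υ : Measure G) [SFinite ν] [SFinite υ]
    [υ.IsAddLeftInvariant] {g : α → G} (hg : Measurable g) :
    MeasurePreserving (fun z : α × G => (z.1, g z.1 + z.2)) (ν.prod υ) (ν.prod υ) :=
  (MeasurePreserving.id ν).skew_product (g := fun x u => g x + u)
    ((hg.comp measurable_fst).add measurable_snd)
    (ae_of_all _ fun x => map_add_left_eq_self υ (g x))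

variable {μ : Measure Ω} [IsProbabilityMeasure μ] {X : Ω → α} {U : Ω → G} {g : α → G}
  [(μ.map U).IsAddLeftInvariant]

theorem map_prodMk_comp_add_eq_prod (hX : AEMeasurable X μ) (hU : AEMeasurable U μ)
    (hg : Measurable g) (hXU : IndepFun X U μ) :
    μ.map (fun ω => (X ω, g (X ω) + U ω)) = (μ.map X).prod (μ.map U) := by
  have shear := measurePreserving_prodMk_fst_add (μ.map X) (μ.map U) hg
  calc μ.map (fun ω => (X ω, g (X ω) + U ω))
      = (μ.map fun ω => (X ω, U ω)).map fun z => (z.1, g z.1 + z.2) :=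
        (AEMeasurable.map_map_of_aemeasurable shear.measurable.aemeasurable (hX.prodMk hU)).symm
    _ = (μ.map X).prod (μ.map U) := by
        rw [hXU.map_prod_eq_prod_map_map hX hU, shear.map_eq]

theorem map_comp_add_eq_map (hX : AEMeasurable X μ) (hU : AEMeasurable U μ) (hg : Measurable g)
    (hXU : IndepFun X U μ) : μ.map (fun ω => g (X ω) + U ω) = μ.map U := by
  have := Measure.isProbabilityMeasure_map hX
  rw [← Measure.snd_map_prodMk₀ hX, map_prodMk_comp_add_eq_prod hX hU hg hXU, Measure.snd_prod]

theorem indepFun_comp_add (hX : AEMeasurable X μ) (hU : AEMeasurable U μ) (hg : Measurable g)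
    (hXU : IndepFun X U μ) : IndepFun (fun ω => g (X ω) + U ω) X μ := by
  have hT : AEMeasurable (fun ω => g (X ω) + U ω) μ := (hg.comp_aemeasurable hX).add hU
  refine IndepFun.symm ((indepFun_iff_map_prod_eq_prod_map_map hX hT).2 ?_)
  rw [map_prodMk_comp_add_eq_prod hX hU hg hXU, map_comp_add_eq_map hX hU hg hXU]

end OneTimePad

section Rows

variable {ι κ R : Type*} [Fintype κ]

theorem mulVec_surjective_of_submatrix_id {κ' : Type*} [Fintype κ'] [CommSemiring R]
    (A : Matrix ι κ R) (c : κ' → κ) (h : Function.Surjective (A.submatrix id c).mulVec) :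
    Function.Surjective A.mulVec := by
  rw [← Matrix.coe_mulVecLin, ← LinearMap.range_eq_top, Matrix.range_mulVecLin] at h ⊢
  exact top_unique (h ▸ Submodule.span_mono (Set.range_comp_subset_range c A.col))

theorem mulVec_surjective_submatrix_of_card_le [CommRing R] (B : Matrix ι κ R)
    (hB : ∀ (m : ℕ) (r : Fin m → ι) (c : Fin m → κ), Function.Injective r →
      Function.Injective c → IsUnit (B.submatrix r c).det)
    (I : Finset ι) (hI : I.card ≤ Fintype.card κ) :
    Function.Surjective (B.submatrix (Subtype.val : I → ι) id).mulVec := by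
  classical
  obtain ⟨c⟩ : Nonempty (I ↪ κ) := Function.Embedding.nonempty_of_card_le (by simpa using hI)
  have det_isUnit : IsUnit (B.submatrix (Subtype.val : I → ι) c).det := by
    rw [← Matrix.det_submatrix_equiv_self I.equivFin.symm]
    exact hB _ _ _ (Subtype.val_injective.comp I.equivFin.symm.injective)
      (c.injective.comp I.equivFin.symm.injective)
  exact mulVec_surjective_of_submatrix_id _ c <|
    Matrix.mulVec_surjective_iff_isUnit.2 ((Matrix.isUnit_iff_isUnit_det _).2 det_isUnit)

end Rows

theorem secret_sharing_secrecy_general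
    {α ι κ R Ω : Type*} [MeasurableSpace α] [DecidableEq ι] [Fintype κ] [DecidableEq κ]
    [CommRing R] [Fintype R] [MeasurableSpace R] [MeasurableSingletonClass R]
    [MeasurableSpace Ω] (μ : Measure Ω) [IsProbabilityMeasure μ]
    (f : ι → α → R) (hf : ∀ i, Measurable (f i)) (B : Matrix ι κ R)
    (hB : ∀ (m : ℕ) (r : Fin m → ι) (c : Fin m → κ), Function.Injective r →
      Function.Injective c → IsUnit (B.submatrix r c).det)
    (W : Ω → α) (Y : Ω → κ → R) (hW : AEMeasurable W μ)
    (hY : μ.map Y = (PMF.uniformOfFintype (κ → R)).toMeasure) (hWY : IndepFun W Y μ)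
    (I : Finset ι) (hI : I.card ≤ Fintype.card κ) :
    μ.map (fun ω (i : I) => f i (W ω) + (B *ᵥ Y ω) i)
        = (PMF.uniformOfFintype (I → R)).toMeasure ∧
      IndepFun (fun ω (i : I) => f i (W ω) + (B *ᵥ Y ω) i) W μ := by
  let N : Matrix I κ R := B.submatrix Subtype.val id
  have hN : Measurable N.mulVec := measurable_of_countable _
  have hYm : AEMeasurable Y μ := .of_map_ne_zero (hY ▸ IsProbabilityMeasure.ne_zero _)
  have mask_uniform : μ.map (N.mulVec ∘ Y) = (PMF.uniformOfFintype (I → R)).toMeasure := by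
    rw [← AEMeasurable.map_map_of_aemeasurable hN.aemeasurable hYm, hY]
    exact map_toMeasure_uniformOfFintype_of_surjective N.mulVecLin.toAddMonoidHom
      (mulVec_surjective_submatrix_of_card_le B hB I hI)
  have : (μ.map (N.mulVec ∘ Y)).IsAddLeftInvariant := mask_uniform ▸ inferInstance
  have hU : AEMeasurable (N.mulVec ∘ Y) μ := hN.comp_aemeasurable hYm
  have hg : Measurable fun w (i : I) => f i w := measurable_pi_lambda _ fun i => hf i
  have hWU : IndepFun W (N.mulVec ∘ Y) μ := hWY.comp measurable_id hN
  exact ⟨(map_comp_add_eq_map hW hU hg hWU).trans mask_uniform, indepFun_comp_add hW hU hg hWU⟩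

/-- **Secrecy of the `(G,P,Q)` secret sharing scheme.** If every square submatrix of the
encoding matrix `C` is invertible and the `Q` key symbols are uniform and independent of
the message `W`, then any collection of at most `Q` shares is uniformly distributed and
independent of the message. -/
theorem secret_sharing_secrecy
    {𝔽 : Type*} [Field 𝔽] [Fintype 𝔽] [MeasurableSpace 𝔽] [MeasurableSingletonClass 𝔽]
    (P Q : ℕ) (hP : 0 < P) (hQ : 0 < Q)
    (C : Matrix (Fin (P + Q)) (Fin (P + Q)) 𝔽)
    (hC : ∀ (m : ℕ) (r c : Fin m → Fin (P + Q)), Function.Injective r →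
      Function.Injective c → IsUnit (C.submatrix r c).det)
    {Ω : Type*} [MeasurableSpace Ω] (μ : Measure Ω) [IsProbabilityMeasure μ]
    (W : Ω → (Fin P → 𝔽)) (Y : Ω → (Fin Q → 𝔽))
    (hWmeas : Measurable W) (hYmeas : Measurable Y)
    (hYunif : Measure.map Y μ = (PMF.uniformOfFintype (Fin Q → 𝔽)).toMeasure)
    (hindep : IndepFun W Y μ)
    (S : Fin (P + Q) → Ω → 𝔽)
    (hS : ∀ i ω, S i ω =
      (∑ p : Fin P, C i (Fin.castAdd Q p) * W ω p) +
      (∑ q : Fin Q, C i (Fin.natAdd P q) * Y ω q)) :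
    ∀ I : Finset (Fin (P + Q)), I.card ≤ Q →
      Measure.map (fun ω (i : I) => S i ω) μ
        = (PMF.uniformOfFintype (↥I → 𝔽)).toMeasure ∧
      IndepFun (fun ω (i : I) => S i ω) W μ := by
  obtain rfl : S = _ := funext₂ hS
  exact fun I hI => secret_sharing_secrecy_general μ
    (fun i w => ∑ p, C i (Fin.castAdd Q p) * w p) (fun _ => measurable_of_countable _)
    (C.submatrix id (Fin.natAdd P))
    (fun m r c hr hc => hC m r _ hr ((Fin.natAdd_injective Q P).comp hc))
    W Y hWmeas.aemeasurable hYunif hindep I (by simpa using hI)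
end

section
/- Let (Ω, μ) be a probability space, α, β, γ finite nonempty types, W : Ω → α, A : Ω → β, B : Ω → γ measurable random variables. Suppose W is uniformly distributed on α, W and A are independent, and there is a function g : β × γ → α with W = g(A, B) almost surely. Then card α ≤ card γ. -/
open MeasureTheory ProbabilityTheory

/-!
An event `W = w` of positive probability does not affect the law of the independent variable `A`.
So if almost surely `A ∈ t` whenever `W = w`, then almost surely `A ∈ t` outright. Taking for `t`
the set of those `a` for which some `c` satisfies `g (a, c) = w`, and letting `w` run through the
countably many values of `W`, one finds that `g (A, ·)` is almost surely surjective.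
-/

section Independence

variable {Ω α β γ : Type*} [MeasurableSpace Ω] {μ : Measure Ω} [MeasurableSpace α]
  [MeasurableSpace β] {W : Ω → α} {A : Ω → β}

theorem ae_mem_of_indepFun_of_ae_imp (hindep : IndepFun W A μ) {s : Set α} {t : Set β}
    (hs : MeasurableSet s) (ht : MeasurableSet t) (hpos : μ (W ⁻¹' s) ≠ 0)
    (himp : ∀ᵐ ω ∂μ, W ω ∈ s → A ω ∈ t) : ∀ᵐ ω ∂μ, A ω ∈ t := by
  have hinter : μ (W ⁻¹' s ∩ A ⁻¹' tᶜ) = 0 :=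
    measure_eq_zero_iff_ae_notMem.2 <| himp.mono fun ω h hω => hω.2 (h hω.1)
  rw [hindep.measure_inter_preimage_eq_mul _ _ hs ht.compl] at hinter
  exact (mul_eq_zero.1 hinter).resolve_left hpos

theorem ae_surjective_of_indepFun_of_ae_eq [Countable α] [MeasurableSingletonClass α]
    [Countable γ] {B : Ω → γ} {g : β × γ → α} (hindep : IndepFun W A μ)
    (hpos : ∀ w, μ (W ⁻¹' {w}) ≠ 0) (hgm : ∀ c, Measurable fun b => g (b, c))
    (hg : W =ᵐ[μ] fun ω => g (A ω, B ω)) :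
    ∀ᵐ ω ∂μ, Function.Surjective fun c => g (A ω, c) := by
  refine ae_all_iff.2 fun w => ?_
  have hmeas : MeasurableSet {b | ∃ c, g (b, c) = w} := by
    rw [Set.ofPred_exists]
    exact .iUnion fun c => hgm c (measurableSet_singleton w)
  exact ae_mem_of_indepFun_of_ae_imp hindep (measurableSet_singleton w) hmeas (hpos w) <|
    hg.mono fun ω hω hw => ⟨B ω, hω.symm.trans hw⟩

theorem measure_preimage_singleton_ne_zero_of_map_eq_toMeasure [MeasurableSingletonClass α]
    {p : PMF α} (hp : μ.map W = p.toMeasure) {w : α} (hw : w ∈ p.support) :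
    μ (W ⁻¹' {w}) ≠ 0 := by
  have : NeZero (μ.map W) := hp ▸ inferInstance
  rw [← Measure.map_apply_of_aemeasurable (aemeasurable_of_map_neZero this)
    (measurableSet_singleton w), hp, p.toMeasure_apply_singleton w (measurableSet_singleton w)]
  exact (p.mem_support_iff w).1 hw

theorem card_le_of_uniform_indep_recoverable_general [Countable α] [MeasurableSingletonClass α]
    [Countable γ] {B : Ω → γ} {g : β × γ → α} (hindep : IndepFun W A μ)
    (hpos : ∀ w, μ (W ⁻¹' {w}) ≠ 0) (hgm : ∀ c, Measurable fun b => g (b, c))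
    (hg : W =ᵐ[μ] fun ω => g (A ω, B ω)) : ENat.card α ≤ ENat.card γ := by
  rcases isEmpty_or_nonempty α with hα | ⟨⟨w⟩⟩
  · simp [(ENat.card_eq_zero_iff_empty α).2 hα]
  · have : NeZero μ := ⟨fun hμ => hpos w (by simp [hμ])⟩
    obtain ⟨ω, hω⟩ := (ae_surjective_of_indepFun_of_ae_eq hindep hpos hgm hg).exists
    exact ENat.card_le_card_of_injective (Function.injective_surjInv hω)

end Independence

/-- **Cut-set counting lemma.** A uniformly distributed random variable `W` that is
independent of `A` yet recoverable almost surely as a function of `(A, B)` cannot take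
more values than `B` does. -/
theorem card_le_of_uniform_indep_recoverable
    {Ω : Type*} [MeasurableSpace Ω] (μ : Measure Ω) [IsProbabilityMeasure μ]
    {α β γ : Type*} [Fintype α] [Nonempty α] [Fintype β] [Nonempty β]
    [Fintype γ] [Nonempty γ]
    [MeasurableSpace α] [MeasurableSingletonClass α]
    [MeasurableSpace β] [MeasurableSingletonClass β]
    [MeasurableSpace γ] [MeasurableSingletonClass γ]
    (W : Ω → α) (A : Ω → β) (B : Ω → γ)
    (hW : Measurable W) (hA : Measurable A) (hB : Measurable B)
    (hWunif : Measure.map W μ = (PMF.uniformOfFintype α).toMeasure)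
    (hindep : IndepFun W A μ)
    (g : β × γ → α) (hg : W =ᵐ[μ] fun ω => g (A ω, B ω)) :
    Fintype.card α ≤ Fintype.card γ := by
  have hpos (w : α) : μ (W ⁻¹' {w}) ≠ 0 :=
    measure_preimage_singleton_ne_zero_of_map_eq_toMeasure hWunif <|
      PMF.mem_support_uniformOfFintype w
  simpa only [ENat.card_eq_coe_fintype_card, Nat.cast_le] using
    card_le_of_uniform_indep_recoverable_general hindep hpos (fun _ => .of_discrete) hg
end

section
/- Let K, l, t be natural numbers with 1 ≤ l, t + l + 1 ≤ K, and l·(t+2) ≤ K + 1. Then C(K, t+2) · C(K−l, t) ≤ C(K, t+1) · C(K−l, t+1). In particular, the communication load R^C(t) = C(K,t+1)/C(K−l,t) of the proposed scheme is non-increasing in t on the range t ∈ {0, 1, …, max(⌈(K+1)/l⌉ − 2, 0)}. -/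
/-!
Consecutive binomial coefficients satisfy `C(n,k+1)·(k+1) = C(n,k)·(n−k)`, so comparing
`C(a,i+1)/C(a,i)` with `C(b,j+1)/C(b,j)` amounts to comparing `(a−i)/(i+1)` with `(b−j)/(j+1)`.
For `a = K`, `b = K−l`, `i = t+1`, `j = t`, clearing denominators turns this comparison into
`l(t+2) ≤ K+1`.
-/

section SuccessiveRatios

variable {a b i j : ℕ}

theorem choose_succ_mul_choose_le_choose_mul_choose_succ
    (h : (a - i) * (j + 1) ≤ (b - j) * (i + 1)) :
    a.choose (i + 1) * b.choose j ≤ a.choose i * b.choose (j + 1) := by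
  refine Nat.le_of_mul_le_mul_right (c := (i + 1) * (j + 1)) ?_ (by positivity)
  calc a.choose (i + 1) * b.choose j * ((i + 1) * (j + 1))
      = a.choose (i + 1) * (i + 1) * b.choose j * (j + 1) := by ring
    _ = a.choose i * b.choose j * ((a - i) * (j + 1)) := by rw [Nat.choose_succ_right_eq]; ring
    _ ≤ a.choose i * b.choose j * ((b - j) * (i + 1)) := Nat.mul_le_mul_left _ h
    _ = a.choose i * (b.choose (j + 1) * (j + 1)) * (i + 1) := by
      rw [Nat.choose_succ_right_eq]; ring
    _ = a.choose i * b.choose (j + 1) * ((i + 1) * (j + 1)) := by ring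

theorem choose_succ_div_choose_succ_le_choose_div_choose
    {𝕜 : Type*} [Field 𝕜] [LinearOrder 𝕜] [IsStrictOrderedRing 𝕜]
    (hj : j < b) (h : (a - i) * (j + 1) ≤ (b - j) * (i + 1)) :
    (a.choose (i + 1) : 𝕜) / b.choose (j + 1) ≤ (a.choose i : 𝕜) / b.choose j := by
  have choose_pos : (0 : 𝕜) < b.choose j := mod_cast Nat.choose_pos hj.le
  have choose_succ_pos : (0 : 𝕜) < b.choose (j + 1) := mod_cast Nat.choose_pos hj
  rw [div_le_div_iff₀ choose_succ_pos choose_pos]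
  exact_mod_cast choose_succ_mul_choose_le_choose_mul_choose_succ h

end SuccessiveRatios

theorem sub_succ_mul_succ_le_sub_sub_mul_add_two {K l t : ℕ} (h : l * (t + 2) ≤ K + 1) :
    (K - (t + 1)) * (t + 1) ≤ (K - l - t) * (t + 2) := by
  have hsq : t * (t + 2) + 1 = (t + 1) * (t + 1) := by ring
  have hK : K * (t + 2) = K * (t + 1) + K := by ring
  simp only [Nat.sub_mul]
  omega

/-- **Monotonicity of the achievable load `R^C(t) = C(K,t+1)/C(K−l,t)`.**
If `1 ≤ l`, `t + l + 1 ≤ K` and `l(t+2) ≤ K+1`, then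
`C(K,t+2)·C(K−l,t) ≤ C(K,t+1)·C(K−l,t+1)`; equivalently `R^C(t+1) ≤ R^C(t)`,
so `R^C` is non-increasing on the range `t ∈ {0,…,max(⌈(K+1)/l⌉−2,0)}`. -/
theorem rate_choose_ratio_antitone
    (K l t : ℕ) (hl : 1 ≤ l) (htlK : t + l + 1 ≤ K) (hlt : l * (t + 2) ≤ K + 1) :
    Nat.choose K (t + 2) * Nat.choose (K - l) t ≤
      Nat.choose K (t + 1) * Nat.choose (K - l) (t + 1) ∧
    (Nat.choose K (t + 2) : ℚ) / Nat.choose (K - l) (t + 1) ≤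
      (Nat.choose K (t + 1) : ℚ) / Nat.choose (K - l) t := by
  have hfactor := sub_succ_mul_succ_le_sub_sub_mul_add_two hlt
  have ht : t < K - l := by omega
  exact ⟨choose_succ_mul_choose_le_choose_mul_choose_succ hfactor,
    choose_succ_div_choose_succ_le_choose_div_choose ht hfactor⟩
end

section
/- Let K, l, t be natural numbers with 1 ≤ l and l + t ≤ K. Then, as real numbers, (∏_{j=0}^{t−1} (K−j)/(K−l−j))² ≤ (K·(K−t+1) / ((K−l)·(K−l−t+1)))^t. -/
/-!
In the square of the product, pair the factor of index `i` with the one of index `t - 1 - i`. Since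
`(a - x) * (a - y) = a * (a - (x + y)) + x * y`, the product of the ratios with shifts `x` and `y`
arises from the one with shifts `0` and `x + y` by adding `x * y` to numerator and denominator,
which cannot increase a fraction that is at least `1`.
-/

theorem sq_prod_range_le_pow_of_mul_le {R : Type*} [CommSemiring R] [PartialOrder R]
    [IsOrderedRing R] {f : ℕ → R} {c : R} {n : ℕ} (hf : ∀ i < n, 0 ≤ f i)
    (hc : ∀ i j, i + j + 1 = n → f i * f j ≤ c) :
    (∏ i ∈ Finset.range n, f i) ^ 2 ≤ c ^ n :=
  calc (∏ i ∈ Finset.range n, f i) ^ 2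
      = ∏ i ∈ Finset.range n, f i * f (n - 1 - i) := by
        rw [Finset.prod_mul_distrib, Finset.prod_range_reflect, sq]
    _ ≤ ∏ _i ∈ Finset.range n, c := by
        refine Finset.prod_le_prod (fun i hi => ?_) fun i hi => ?_ <;>
          rw [Finset.mem_range] at hi
        · exact mul_nonneg (hf i hi) (hf _ (by lia))
        · exact hc i _ (by lia)
    _ = c ^ n := by rw [Finset.prod_const, Finset.card_range]

section LinearOrderedField

variable {𝕜 : Type*} [Field 𝕜] [LinearOrder 𝕜] [IsStrictOrderedRing 𝕜]

theorem add_div_add_right_le_div {a b c : 𝕜} (hb : 0 < b) (hba : b ≤ a) (hc : 0 ≤ c) :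
    (a + c) / (b + c) ≤ a / b := by
  rw [div_le_div_iff₀ (by positivity) hb]
  linarith [mul_le_mul_of_nonneg_right hba hc]

theorem sub_div_sub_mul_sub_div_sub_le {a b x y : 𝕜} (hx : 0 ≤ x) (hy : 0 ≤ y)
    (hba : b ≤ a) (hb : x + y < b) :
    (a - x) / (b - x) * ((a - y) / (b - y)) ≤ a * (a - (x + y)) / (b * (b - (x + y))) := by
  have sub_mul_sub_eq (c : 𝕜) : (c - x) * (c - y) = c * (c - (x + y)) + x * y := by ring
  have hb₀ : 0 < b := (add_nonneg hx hy).trans_lt hb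
  have ha₀ : 0 ≤ a := hb₀.le.trans hba
  have hbxy : 0 < b - (x + y) := sub_pos.mpr hb
  rw [div_mul_div_comm, sub_mul_sub_eq, sub_mul_sub_eq]
  exact add_div_add_right_le_div (mul_pos hb₀ hbxy) (by gcongr) (mul_nonneg hx hy)

theorem prod_ratio_sq_le_pow_general {K l : 𝕜} {t : ℕ} (hl : 0 ≤ l) (hlt : l + t < K + 1) :
    (∏ j ∈ Finset.range t, (K - j) / (K - l - j)) ^ 2 ≤
      (K * (K - t + 1) / ((K - l) * (K - l - t + 1))) ^ t := by
  refine sq_prod_range_le_pow_of_mul_le (fun i hi => ?_) fun i j hij => ?_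
  · have hit : (i : 𝕜) + 1 ≤ t := by exact_mod_cast hi
    exact div_nonneg (by linarith) (by linarith)
  · have ht : (t : 𝕜) = i + j + 1 := by exact_mod_cast hij.symm
    have sub_add_one_eq (c : 𝕜) : c - t + 1 = c - (i + j) := by rw [ht]; ring
    rw [sub_add_one_eq, sub_add_one_eq]
    exact sub_div_sub_mul_sub_div_sub_le i.cast_nonneg j.cast_nonneg (by linarith) (by linarith)

end LinearOrderedField

/-- **Pairing bound used in the proof of Corollary 1:**
`(∏_{j=0}^{t−1} (K−j)/(K−l−j))² ≤ (K(K−t+1)/((K−l)(K−l−t+1)))^t`. -/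
theorem prod_ratio_sq_le_pow
    (K l t : ℕ) (hl : 1 ≤ l) (hlt : l + t ≤ K) :
    (∏ j ∈ Finset.range t, ((K : ℝ) - j) / ((K : ℝ) - l - j)) ^ 2 ≤
      ((K : ℝ) * ((K : ℝ) - t + 1) / (((K : ℝ) - l) * ((K : ℝ) - l - t + 1))) ^ t :=
  prod_ratio_sq_le_pow_general l.cast_nonneg (by exact_mod_cast Nat.lt_succ_of_le hlt)
end

section
/- Let K, l be natural numbers with 1 ≤ l and 12·l ≤ K + 1, and set t = ⌊(K+1)/(10l)⌋. Then, as rational numbers, C(K, t+1) / C(K−l, t) ≤ 12·l. -/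
/-!
Pascal's rule turns `C(K, t+1)` into `C(K+1, t+1) - C(K, t)`, and `C(K+1, t+1)` is `(K+1)/(t+1)`
times `C(K, t)`; since `K + 1 < c l (t+1)` for `t = ⌊(K+1)/(c l)⌋`, the numerator is at most
`(c l - 1) C(K, t)`. For the denominator, a union bound over the `l` removed points, each lying in
a fraction `t/K` of the `t`-subsets, gives `C(K-l, t) ≥ (1 - l t / K) C(K, t)`, and `c l t ≤ K + 1`
with `l t ≥ 1` makes `l t / K` at most `1/(c-1)`; for `t = 0` there is no loss. The value
`c = 10` gives the bound `(9/8) (10 l - 1) ≤ 12 l`.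
-/

theorem mul_choose_le_mul_choose_pred_add {m n : ℕ} (hmn : m ≤ n) (k : ℕ) :
    n * m.choose k ≤ n * (m - 1).choose k + k * n.choose k := by
  rcases m with _ | m
  · exact Nat.le_add_right _ _
  rcases k with _ | k
  · simp
  obtain ⟨n, rfl⟩ : ∃ n', n = n' + 1 := Nat.exists_eq_add_one.2 (by omega)
  have hlost : (n + 1) * m.choose k ≤ (k + 1) * (n + 1).choose (k + 1) :=
    calc (n + 1) * m.choose k ≤ (n + 1) * n.choose k :=
          Nat.mul_le_mul_left _ (Nat.choose_le_choose k (by omega))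
      _ = (k + 1) * (n + 1).choose (k + 1) := by rw [Nat.add_one_mul_choose_eq, mul_comm]
  rw [Nat.choose_succ_succ', mul_add, add_comm, Nat.add_sub_cancel]
  exact Nat.add_le_add_left hlost _

theorem mul_choose_le_mul_choose_sub_add (n l k : ℕ) :
    n * n.choose k ≤ n * (n - l).choose k + l * k * n.choose k := by
  induction l with
  | zero => simp
  | succ l ih =>
    calc n * n.choose k ≤ n * (n - l).choose k + l * k * n.choose k := ih
      _ ≤ n * (n - l - 1).choose k + k * n.choose k + l * k * n.choose k :=
          Nat.add_le_add_right (mul_choose_le_mul_choose_pred_add (Nat.sub_le n l) k) _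
      _ = n * (n - (l + 1)).choose k + (l + 1) * k * n.choose k := by rw [Nat.sub_sub]; ring

theorem mul_choose_le_mul_choose_sub_add_choose {n l k d : ℕ} (h : d * (l * k) ≤ n) :
    d * n.choose k ≤ d * (n - l).choose k + n.choose k := by
  rcases n.eq_zero_or_pos with rfl | hn
  · simp
  refine Nat.le_of_mul_le_mul_left ?_ hn
  calc n * (d * n.choose k) = d * (n * n.choose k) := by ring
    _ ≤ d * (n * (n - l).choose k + l * k * n.choose k) :=
        Nat.mul_le_mul_left d (mul_choose_le_mul_choose_sub_add n l k)
    _ = n * (d * (n - l).choose k) + d * (l * k) * n.choose k := by ring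
    _ ≤ n * (d * (n - l).choose k) + n * n.choose k := by gcongr
    _ = n * (d * (n - l).choose k + n.choose k) := by ring

theorem choose_succ_succ_le_mul_choose {n k a : ℕ} (h : n + 1 ≤ a * (k + 1)) :
    (n + 1).choose (k + 1) ≤ a * n.choose k := by
  refine Nat.le_of_mul_le_mul_right ?_ k.succ_pos
  calc (n + 1).choose (k + 1) * (k + 1) = (n + 1) * n.choose k :=
        (Nat.add_one_mul_choose_eq n k).symm
    _ ≤ a * (k + 1) * n.choose k := Nat.mul_le_mul_right _ h
    _ = a * n.choose k * (k + 1) := by ring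

theorem sub_one_mul_le_of_mul_le_succ {c m n : ℕ} (h : c * m ≤ n + 1) : (c - 1) * m ≤ n := by
  rcases m.eq_zero_or_pos with rfl | hm
  · exact Nat.zero_le n
  · rw [Nat.sub_one_mul]
    omega

theorem rate_at_floor_le_twelve_l_general (K : ℕ) {l c : ℕ} (hl : 1 ≤ l) (hc : 3 ≤ c) :
    (Nat.choose K ((K + 1) / (c * l) + 1) : ℚ) / Nat.choose (K - l) ((K + 1) / (c * l)) ≤
      (c - 1) / (c - 2) * (c * l - 1) := by
  have hfloor : c * (l * ((K + 1) / (c * l))) ≤ K + 1 := by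
    rw [← mul_assoc]
    exact Nat.mul_div_le _ _
  have hkept := mul_choose_le_mul_choose_sub_add_choose (sub_one_mul_le_of_mul_le_succ hfloor)
  have hnext := choose_succ_succ_le_mul_choose
    (Nat.lt_mul_div_succ (K + 1) (Nat.mul_pos (by omega : 0 < c) hl)).le
  rw [Nat.choose_succ_succ'] at hnext
  generalize (K + 1) / (c * l) = t at *
  have hc' : (3 : ℚ) ≤ c := mod_cast hc
  have hl' : (1 : ℚ) ≤ l := mod_cast hl
  have hcl : (0 : ℚ) ≤ c * l - 1 := by nlinarith
  have hfactor : (0 : ℚ) ≤ (c - 1) / (c - 2) := div_nonneg (by linarith) (by linarith)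
  have hratio : (K.choose t : ℚ) ≤ (c - 1) / (c - 2) * (K - l).choose t := by
    rw [div_mul_eq_mul_div, le_div_iff₀ (by linarith)]
    have := (Nat.cast_le (α := ℚ)).2 hkept
    push_cast [Nat.cast_sub (by omega : 1 ≤ c)] at this
    linarith
  refine div_le_of_le_mul₀ (by positivity) (mul_nonneg hfactor hcl) ?_
  calc (K.choose (t + 1) : ℚ) ≤ (c * l - 1) * K.choose t := by
        have : (K.choose t + K.choose (t + 1) : ℚ) ≤ c * l * K.choose t := mod_cast hnext
        linarith
    _ ≤ (c * l - 1) * ((c - 1) / (c - 2) * (K - l).choose t) := by gcongr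
    _ = (c - 1) / (c - 2) * (c * l - 1) * (K - l).choose t := by ring

/-- **Key step of region 3 in the proof of Corollary 1.** With `t = ⌊(K+1)/(10l)⌋` and
`12l ≤ K+1`, the achievable communication load satisfies `C(K,t+1)/C(K−l,t) ≤ 12l`. -/
theorem rate_at_floor_le_twelve_l
    (K l : ℕ) (hl : 1 ≤ l) (hlK : 12 * l ≤ K + 1) :
    (Nat.choose K ((K + 1) / (10 * l) + 1) : ℚ) /
        Nat.choose (K - l) ((K + 1) / (10 * l)) ≤ 12 * l := by
  refine (rate_at_floor_le_twelve_l_general K hl (by norm_num)).trans ?_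
  norm_num; linarith [l.cast_nonneg (α := ℚ)]
end
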